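/- arXiv:1411.4732 — 3 statements merged into one kernel-verified Lean document; each statement's English description precedes it below -/
import Mathlib

section
/- Let Q and Y be jointly distributed random variables on finite types with joint pmf p, let f : Y → X be a function into a finite type, and let X = f(Y) be the induced random variable (so the joint pmf of (Q, X, Y) is supported on triples (q, f(y), y)). If the conditional mutual information I(Q:Y|X) = 0, then for any two states y₁, y₂ with p_Y(y₁) > 0, p_Y(y₂) > 0 and f(y₁) = f(y₂), the conditional distributions of Q agree: p(q|y₁) = p(q|y₂) for every q. -/
open Real Finset

/- STATEMENT 8: Let `(Q, Y)` have joint pmf `p`, let `X = f(Y)`, and let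
`r(q,x,y) = p(q,y)` if `x = f y` and `0` otherwise be the induced joint pmf of `(Q,X,Y)`.
If `I(Q:Y|X) = 0`, then for any `y₁, y₂` with positive probability and `f y₁ = f y₂`,
the conditional distributions `p(·|y₁)` and `p(·|y₂)` of `Q` agree. -/

section Defs

variable {Q Y X : Type*} [Fintype Q] [Fintype Y] [Fintype X] [DecidableEq X]

/-- Induced joint pmf of `(Q, X, Y)` where `X = f(Y)`. -/
noncomputable def ind (p : Q × Y → ℝ) (f : Y → X) : Q × X × Y → ℝ :=
  fun a => if a.2.1 = f a.2.2 then p (a.1, a.2.2) else 0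

/-- Marginal of `X` under the induced pmf. -/
noncomputable def indX (p : Q × Y → ℝ) (f : Y → X) (x : X) : ℝ :=
  ∑ q, ∑ y, ind p f (q, x, y)

/-- Marginal of `(Q, X)` under the induced pmf. -/
noncomputable def indQX (p : Q × Y → ℝ) (f : Y → X) (q : Q) (x : X) : ℝ :=
  ∑ y, ind p f (q, x, y)

/-- Marginal of `(X, Y)` under the induced pmf. -/
noncomputable def indXY (p : Q × Y → ℝ) (f : Y → X) (x : X) (y : Y) : ℝ :=
  ∑ q, ind p f (q, x, y)

/-- Marginal of `Y`. -/
noncomputable def margY (p : Q × Y → ℝ) (y : Y) : ℝ :=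
  ∑ q, p (q, y)

/-- Conditional mutual information `I(Q:Y|X)` for `X = f(Y)`. -/
noncomputable def condMI (p : Q × Y → ℝ) (f : Y → X) : ℝ :=
  ∑ q, ∑ x, ∑ y,
    ind p f (q, x, y) *
      logb 2 (ind p f (q, x, y) * indX p f x / (indQX p f q x * indXY p f x y))

end Defs

lemma aux_term (r a b c : ℝ) (hr : 0 ≤ r) (hra : r ≤ a) (hrb : r ≤ b) (hac : a ≤ c) :
    0 ≤ r * Real.log (r * c / (a * b)) - r + a * b / c ∧
    (r * Real.log (r * c / (a * b)) - r + a * b / c = 0 → r = a * b / c) := by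
  rcases hr.eq_or_lt with h0 | h0
  · subst h0
    have : 0 ≤ a * b / c := by
      have := hra.trans hac
      positivity
    simp only [zero_mul, zero_sub, neg_zero, zero_add]
    exact ⟨this, fun h => h.symm⟩
  · have ha : 0 < a := by linarith
    have hb : 0 < b := by linarith
    have hc : 0 < c := by linarith
    set t := a * b / (r * c) with ht
    have htp : 0 < t := by positivity
    have e1 : r * c / (a * b) = t⁻¹ := by rw [ht, inv_div]
    have e2 : a * b / c = r * t := by rw [ht]; field_simp
    rw [e1, e2, Real.log_inv]
    have h1 := Real.log_le_sub_one_of_pos htp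
    refine ⟨by nlinarith, fun h => ?_⟩
    by_cases h2 : t = 1
    · rw [h2, mul_one]
    · have h3 := Real.log_lt_sub_one_of_pos htp h2
      nlinarith

theorem stmt_8 {Q Y X : Type*} [Fintype Q] [Fintype Y] [Fintype X] [DecidableEq X]
    (p : Q × Y → ℝ) (f : Y → X)
    (hnn : ∀ a, 0 ≤ p a)
    (hsum : ∑ a, p a = 1)
    (hcmi : condMI p f = 0) :
    ∀ y₁ y₂ : Y, 0 < margY p y₁ → 0 < margY p y₂ → f y₁ = f y₂ →
      ∀ q : Q, p (q, y₁) / margY p y₁ = p (q, y₂) / margY p y₂ := by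
  classical
  have rnn : ∀ q x y, 0 ≤ ind p f (q, x, y) := by
    intro q x y
    unfold ind
    split_ifs
    · exact hnn _
    · exact le_rfl
  have hra : ∀ q x y, ind p f (q, x, y) ≤ indQX p f q x := fun q x y =>
    Finset.single_le_sum (f := fun y => ind p f (q, x, y)) (fun y _ => rnn q x y) (mem_univ y)
  have hrb : ∀ q x y, ind p f (q, x, y) ≤ indXY p f x y := fun q x y =>
    Finset.single_le_sum (f := fun q => ind p f (q, x, y)) (fun q _ => rnn q x y) (mem_univ q)
  have hac : ∀ q x, indQX p f q x ≤ indX p f x := fun q x =>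
    Finset.single_le_sum (f := fun q => indQX p f q x)
      (fun q _ => Finset.sum_nonneg fun y _ => rnn q x y) (mem_univ q)
  have T := fun q x y => aux_term _ _ _ _ (rnn q x y) (hra q x y) (hrb q x y) (hac q x)
  have hlog : ∑ q, ∑ x, ∑ y, ind p f (q, x, y) * Real.log (ind p f (q, x, y) * indX p f x /
      (indQX p f q x * indXY p f x y)) = 0 := by
    have h2 : Real.log 2 ≠ 0 := (Real.log_pos one_lt_two).ne'
    have h : condMI p f * Real.log 2 = 0 := by rw [hcmi, zero_mul]
    rw [← h]
    simp only [condMI, Finset.sum_mul]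
    refine sum_congr rfl fun q _ => sum_congr rfl fun x _ => sum_congr rfl fun y _ => ?_
    unfold Real.logb
    field_simp
  have hs : ∑ q, ∑ x, ∑ y, indQX p f q x * indXY p f x y / indX p f x =
      ∑ q, ∑ x, ∑ y, ind p f (q, x, y) := by
    rw [sum_comm, sum_comm (f := fun q x => ∑ y, ind p f (q, x, y))]
    refine sum_congr rfl fun x _ => ?_
    have e1 : ∑ y, indXY p f x y = indX p f x := by
      unfold indXY indX
      rw [sum_comm]
    have e2 : ∑ q, indQX p f q x = indX p f x := rfl
    have e3 : ∑ q, ∑ y, ind p f (q, x, y) = indX p f x := rfl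
    rw [e3]
    simp only [← Finset.sum_div, ← Finset.mul_sum, ← Finset.sum_mul, e1, e2]
    exact mul_self_div_self _
  have hz : ∑ q, ∑ x, ∑ y, (ind p f (q, x, y) * Real.log (ind p f (q, x, y) * indX p f x /
      (indQX p f q x * indXY p f x y)) - ind p f (q, x, y)
        + indQX p f q x * indXY p f x y / indX p f x) = 0 := by
    simp only [Finset.sum_add_distrib, Finset.sum_sub_distrib]
    rw [hlog, hs]
    ring
  have key : ∀ q x y, ind p f (q, x, y) = indQX p f q x * indXY p f x y / indX p f x := by
    intro q x y
    apply (T q x y).2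
    have h1 := (Finset.sum_eq_zero_iff_of_nonneg (fun q _ => Finset.sum_nonneg fun x _ =>
      Finset.sum_nonneg fun y _ => (T q x y).1)).1 hz q (mem_univ q)
    have h2 := (Finset.sum_eq_zero_iff_of_nonneg (fun x _ =>
      Finset.sum_nonneg fun y _ => (T q x y).1)).1 h1 x (mem_univ x)
    exact (Finset.sum_eq_zero_iff_of_nonneg (fun y _ => (T q x y).1)).1 h2 y (mem_univ y)
  have fin : ∀ q y, 0 < margY p y →
      p (q, y) / margY p y = indQX p f q (f y) / indX p f (f y) := by
    intro q y hy
    have h := key q (f y) y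
    have e : indXY p f (f y) y = margY p y := by simp [indXY, margY, ind]
    rw [e] at h
    have e' : ind p f (q, f y, y) = p (q, y) := by simp [ind]
    rw [e'] at h
    rw [h, div_eq_iff hy.ne']
    ring
  intro y₁ y₂ h1 h2 hf q
  rw [fin q y₁ h1, fin q y₂ h2, hf]
end

section
/- Consider the Subtle example: Y is uniformly distributed on Fin 3 (states 0, 1, 2, representing y-values 00, 01, 11), with predictors X₁ = f₁(Y) and X₂ = f₂(Y) where f₁(0) = f₁(1) = 0, f₁(2) = 1 and f₂(0) = 0, f₂(1) = f₂(2) = 1. Let Q be any random variable on a finite type jointly distributed with Y (via a joint pmf p on Q × Fin 3 whose marginal on Fin 3 is uniform). If I(Q:Y|X₁) = 0 and I(Q:Y|X₂) = 0, then I(Q:Y) = 0. (Hence I_α(X₁, X₂ : Y) = 0 for the Subtle example, so I_α violates Local Positivity.) -/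
open Real Finset

/- STATEMENT 9: The Subtle example.  `Y` is uniform on `Fin 3` (states `00`, `01`, `11`),
with predictors `X₁ = f₁(Y)`, `X₂ = f₂(Y)` where `f₁ = ![0,0,1]` and `f₂ = ![0,1,1]`.
For any `Q` jointly distributed with `Y`, if `I(Q:Y|X₁) = 0` and `I(Q:Y|X₂) = 0` then
`I(Q:Y) = 0`.  Hence `I_α(X₁, X₂ : Y) = 0` for Subtle. -/

section Defs

variable {Q Y X : Type*} [Fintype Q] [Fintype Y] [Fintype X] [DecidableEq X]

/-- Marginal of `Q`. -/
noncomputable def margQ (p : Q × Y → ℝ) (q : Q) : ℝ :=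
  ∑ y, p (q, y)

/-- Mutual information `I(Q:Y)`. -/
noncomputable def miQY (p : Q × Y → ℝ) : ℝ :=
  ∑ q, ∑ y, p (q, y) * logb 2 (p (q, y) / (margQ p q * margY p y))

end Defs

lemma aux_lt (a b : ℝ) (ha : 0 ≤ a) (hb : 0 ≤ b) (hab : a ≠ b) :
    (a - b) / 2 < a * Real.log (a * (2 / 3) / ((a + b) * (1 / 3))) := by
  rcases ha.eq_or_lt with h | h
  · subst h
    have : 0 < b := lt_of_le_of_ne hb hab
    simp only [zero_mul]
    linarith
  · have hs : 0 < a + b := by linarith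
    have e : a * (2 / 3) / ((a + b) * (1 / 3)) = ((a + b) / (2 * a))⁻¹ := by
      field_simp
    rw [e, Real.log_inv]
    have hne : (a + b) / (2 * a) ≠ 1 := by
      intro h'
      rw [div_eq_one_iff_eq (by positivity)] at h'
      exact hab (by linarith)
    have h3 := Real.log_lt_sub_one_of_pos (by positivity) hne
    have h4 := mul_lt_mul_of_pos_left h3 h
    have h5 : a * ((a + b) / (2 * a) - 1) = (b - a) / 2 := by
      field_simp
      ring
    linarith

/-- The contribution of a pair of equiprobable states to the conditional information. -/
noncomputable def pairG (a b : ℝ) : ℝ :=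
  a * logb 2 (a * (2 / 3) / ((a + b) * (1 / 3))) +
    b * logb 2 (b * (2 / 3) / ((a + b) * (1 / 3)))

lemma pairG_pos (a b : ℝ) (ha : 0 ≤ a) (hb : 0 ≤ b) (hab : a ≠ b) : 0 < pairG a b := by
  have h1 := aux_lt a b ha hb hab
  have h2 := aux_lt b a hb ha hab.symm
  rw [add_comm b a] at h2
  have h3 : 0 < Real.log 2 := Real.log_pos (by norm_num)
  have : pairG a b = (a * Real.log (a * (2 / 3) / ((a + b) * (1 / 3))) +
    b * Real.log (b * (2 / 3) / ((a + b) * (1 / 3)))) / Real.log 2 := by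
    unfold pairG Real.logb
    ring
  rw [this]
  apply div_pos _ h3
  linarith

lemma pairG_self (a : ℝ) : pairG a a = 0 := by
  by_cases h : a = 0
  · simp [pairG, h]
  · have : a * (2 / 3) / ((a + a) * (1 / 3)) = 1 := by
      field_simp
      ring
    rw [pairG, this]
    simp

lemma pairG_sum {Q : Type*} [Fintype Q] (u v : Q → ℝ) (hu : ∀ q, 0 ≤ u q) (hv : ∀ q, 0 ≤ v q)
    (h : ∑ q, pairG (u q) (v q) = 0) (q : Q) : u q = v q := by
  have hnn : ∀ q ∈ Finset.univ, 0 ≤ pairG (u q) (v q) := by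
    intro q _
    by_cases e : u q = v q
    · rw [e, pairG_self]
    · exact (pairG_pos _ _ (hu q) (hv q) e).le
  have h0 := (Finset.sum_eq_zero_iff_of_nonneg hnn).1 h q (Finset.mem_univ q)
  by_contra e
  exact (pairG_pos _ _ (hu q) (hv q) e).ne' h0

lemma single_zero (a : ℝ) : a * logb 2 (a * (1 / 3) / (a * (1 / 3))) = 0 := by
  by_cases h : a = 0
  · simp [h]
  · rw [div_self (by positivity)]
    simp

theorem stmt_9 {Q : Type*} [Fintype Q]
    (p : Q × Fin 3 → ℝ)
    (hnn : ∀ a, 0 ≤ p a)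
    (hmargY : ∀ y, margY p y = 1 / 3)
    (h1 : condMI p (![0, 0, 1] : Fin 3 → Fin 2) = 0)
    (h2 : condMI p (![0, 1, 1] : Fin 3 → Fin 2) = 0) :
    miQY p = 0 := by
  have m0 : ∑ q, p (q, 0) = 1 / 3 := hmargY 0
  have m1 : ∑ q, p (q, 1) = 1 / 3 := hmargY 1
  have m2 : ∑ q, p (q, 2) = 1 / 3 := hmargY 2
  have e23 : (1 / 3 + 1 / 3 : ℝ) = 2 / 3 := by norm_num
  have c1 : condMI p (![0, 0, 1] : Fin 3 → Fin 2) = ∑ q, pairG (p (q, 0)) (p (q, 1)) := by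
    unfold condMI
    refine Finset.sum_congr rfl fun q _ => ?_
    have s := single_zero (p (q, 2))
    simp only [ind, indX, indQX, indXY, Fin.sum_univ_three, Fin.sum_univ_two]
    simp [-one_div, Finset.sum_add_distrib, m0, m1, m2, e23, s, pairG]
  have c2 : condMI p (![0, 1, 1] : Fin 3 → Fin 2) = ∑ q, pairG (p (q, 1)) (p (q, 2)) := by
    unfold condMI
    refine Finset.sum_congr rfl fun q _ => ?_
    have s := single_zero (p (q, 0))
    simp only [ind, indX, indQX, indXY, Fin.sum_univ_three, Fin.sum_univ_two]
    simp [-one_div, Finset.sum_add_distrib, m0, m1, m2, e23, s, pairG]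
  have a1 := pairG_sum _ _ (fun q => hnn (q, 0)) (fun q => hnn (q, 1)) (c1 ▸ h1)
  have a2 := pairG_sum _ _ (fun q => hnn (q, 1)) (fun q => hnn (q, 2)) (c2 ▸ h2)
  unfold miQY
  refine Finset.sum_eq_zero fun q _ => ?_
  have hq : margQ p q = 3 * p (q, 2) := by
    simp only [margQ, Fin.sum_univ_three, a1, a2]
    ring
  have t : p (q, 2) * logb 2 (p (q, 2) / (3 * p (q, 2) * (1 / 3))) = 0 := by
    have e : 3 * p (q, 2) * (1 / 3) = p (q, 2) := by ring
    rw [e]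
    by_cases h : p (q, 2) = 0
    · simp [h]
    · simp [div_self h]
  simp only [Fin.sum_univ_three, hmargY, hq, a1, a2, t, add_zero]
end

section
/- Consider the Unq example: Y is uniformly distributed on Fin 2 × Fin 2, X₁ = f₁(Y) is the first coordinate of Y, and X₂ = f₂(Y) is the second coordinate of Y. For any random variable Q on a finite type jointly distributed with Y (via a joint pmf p on Q × (Fin 2 × Fin 2) whose marginal on Fin 2 × Fin 2 is uniform), if I(Q:Y|X₁) = 0 and I(Q:Y|X₂) = 0, then I(Q:Y) = 0. (Hence I_α(X₁, X₂ : Y) = 0 for the Unq example, matching the desired redundancy of zero.) -/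
open Real Finset

/-- Contribution of a pair of equally likely values to the conditional information. -/
noncomputable def gPair (a b : ℝ) : ℝ :=
  a * logb 2 (a * (1 / 2) / ((a + b) * (1 / 4))) + b * logb 2 (b * (1 / 2) / ((a + b) * (1 / 4)))

lemma gPair_pos {a b : ℝ} (ha : 0 ≤ a) (hb : 0 ≤ b) (hab : a ≠ b) : 0 < gPair a b := by
  have hl2 : 0 < Real.log 2 := Real.log_pos (by norm_num)
  have key : ∀ c s : ℝ, 0 ≤ c → 0 < s → 2 * c ≠ s →
      (c - s / 2) ≤ c * Real.log (c * (1 / 2) / (s * (1 / 4))) ∧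
      (0 < c → (c - s / 2) < c * Real.log (c * (1 / 2) / (s * (1 / 4)))) := by
    intro c s hc hs hne
    have h2 : 0 < c → (c - s / 2) < c * Real.log (c * (1 / 2) / (s * (1 / 4))) := by
      intro hc
      have ht : 0 < s * (1 / 4) / (c * (1 / 2)) := by positivity
      have hne1 : s * (1 / 4) / (c * (1 / 2)) ≠ 1 := by
        intro h
        rw [div_eq_one_iff_eq (by positivity)] at h
        apply hne; linarith
      have h := Real.log_lt_sub_one_of_pos ht hne1
      have h3 : Real.log (c * (1 / 2) / (s * (1 / 4)))
          = - Real.log (s * (1 / 4) / (c * (1 / 2))) := by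
        rw [← Real.log_inv, inv_div]
      rw [h3]
      have h4 := mul_lt_mul_of_pos_left h hc
      have h5 : c * (s * (1 / 4) / (c * (1 / 2)) - 1) = s / 2 - c := by
        field_simp; ring
      linarith
    refine ⟨?_, h2⟩
    rcases hc.eq_or_lt with h | h
    · subst h; simp; linarith
    · exact (h2 h).le
  have hs : 0 < a + b := by
    rcases ha.eq_or_lt with h | h
    · rcases hb.eq_or_lt with h' | h'
      · exact absurd (h.symm.trans h') hab
      · linarith
    · linarith
  have e : gPair a b = (a * Real.log (a * (1 / 2) / ((a + b) * (1 / 4)))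
      + b * Real.log (b * (1 / 2) / ((a + b) * (1 / 4)))) / Real.log 2 := by
    unfold gPair Real.logb; ring
  rw [e]
  apply div_pos _ hl2
  have ka := key a (a + b) ha hs (fun h => hab (by linarith))
  have kb := key b (a + b) hb hs (fun h => hab (by linarith))
  rcases ha.eq_or_lt with h | h
  · have := kb.2 (by linarith)
    linarith [ka.1]
  · have := ka.2 h
    linarith [kb.1]

lemma gPair_nonneg {a b : ℝ} (ha : 0 ≤ a) (hb : 0 ≤ b) : 0 ≤ gPair a b := by
  by_cases hab : a = b
  · subst hab
    unfold gPair
    by_cases h : a = 0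
    · simp [h]
    · have : a * (1 / 2) / ((a + a) * (1 / 4)) = 1 := by field_simp; norm_num
      rw [this]; simp
  · exact (gPair_pos ha hb hab).le

lemma gPair_eq {a b : ℝ} (ha : 0 ≤ a) (hb : 0 ≤ b) (h : gPair a b = 0) : a = b := by
  by_contra hab
  exact (gPair_pos ha hb hab).ne' h

theorem stmt_15 {Q : Type*} [Fintype Q]
    (p : Q × (Fin 2 × Fin 2) → ℝ)
    (hnn : ∀ a, 0 ≤ p a)
    (hmargY : ∀ y, margY p y = 1 / 4)
    (h1 : condMI p (Prod.fst : Fin 2 × Fin 2 → Fin 2) = 0)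
    (h2 : condMI p (Prod.snd : Fin 2 × Fin 2 → Fin 2) = 0) :
    miQY p = 0 := by
  have hm : ∀ i j, ∑ q, p (q, (i, j)) = 1 / 4 := fun i j => hmargY (i, j)
  have e1 : condMI p (Prod.fst : Fin 2 × Fin 2 → Fin 2) =
      ∑ q, (gPair (p (q, (0, 0))) (p (q, (0, 1))) + gPair (p (q, (1, 0))) (p (q, (1, 1)))) := by
    unfold condMI
    refine Finset.sum_congr rfl fun q _ => ?_
    simp [ind, indX, indQX, indXY, Fintype.sum_prod_type, Fin.sum_univ_two,
      Finset.sum_add_distrib, hm, gPair]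
    norm_num
    abel
  have e2 : condMI p (Prod.snd : Fin 2 × Fin 2 → Fin 2) =
      ∑ q, (gPair (p (q, (0, 0))) (p (q, (1, 0))) + gPair (p (q, (0, 1))) (p (q, (1, 1)))) := by
    unfold condMI
    refine Finset.sum_congr rfl fun q _ => ?_
    simp [ind, indX, indQX, indXY, Fintype.sum_prod_type, Fin.sum_univ_two,
      Finset.sum_add_distrib, hm, gPair]
    norm_num
    abel
  rw [e1, Finset.sum_eq_zero_iff_of_nonneg
    (fun q _ => add_nonneg (gPair_nonneg (hnn _) (hnn _)) (gPair_nonneg (hnn _) (hnn _)))] at h1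
  rw [e2, Finset.sum_eq_zero_iff_of_nonneg
    (fun q _ => add_nonneg (gPair_nonneg (hnn _) (hnn _)) (gPair_nonneg (hnn _) (hnn _)))] at h2
  unfold miQY
  refine Finset.sum_eq_zero fun q _ => ?_
  have a1 := h1 q (Finset.mem_univ q)
  have a2 := h2 q (Finset.mem_univ q)
  rw [add_eq_zero_iff_of_nonneg (gPair_nonneg (hnn _) (hnn _)) (gPair_nonneg (hnn _) (hnn _))]
    at a1 a2
  have b1 := gPair_eq (hnn _) (hnn _) a1.1
  have b2 := gPair_eq (hnn _) (hnn _) a2.1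
  have b3 := gPair_eq (hnn _) (hnn _) a1.2
  have hc : ∀ y, p (q, y) = p (q, (0, 0)) := by
    rintro ⟨i, j⟩
    fin_cases i <;> fin_cases j <;> simp <;> linarith
  have hQ : margQ p q = 4 * p (q, (0, 0)) := by
    unfold margQ
    simp [hc]
  refine Finset.sum_eq_zero fun y _ => ?_
  rw [hc y, hQ, hmargY]
  by_cases h : p (q, (0, 0)) = 0
  · simp [h]
  · have : p (q, (0, 0)) / (4 * p (q, (0, 0)) * (1 / 4)) = 1 := by field_simp
    rw [this]; simp
end
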